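/- The following associativity identities hold: (I_{t₁}⊗Y_{t₂,t₃})∘Y_{t₁,t₆} = (Y_{t₁,t₂}⊗I_{t₃})∘Y_{t₄,t₃} as linear maps V_{t₅} → V_{t₁}⊗V_{t₂}⊗V_{t₃}; (I_{t₁}⊗Y'_{t₂,t₃})∘Y'_{t₁,t₉} = (Y'_{t₁,t₂}⊗I_{t₃})∘Y'_{t₇,t₃} as linear maps from V_{t₁+t₉−e₂+e₃} = V_{t₇+t₃−e₂+e₃} to V_{t₁}⊗V_{t₂}⊗V_{t₃}; L_{t₁,t₆}∘(I_{t₁}⊗L_{t₂,t₃}) = L_{t₄,t₃}∘(L_{t₁,t₂}⊗I_{t₃}) as linear maps V_{t₁}⊗V_{t₂}⊗V_{t₃} → V_{t₅}; and L'_{t₁,t₉}∘(I_{t₁}⊗L'_{t₂,t₃}) = L'_{t₇,t₃}∘(L'_{t₁,t₂}⊗I_{t₃}) as linear maps V_{t₁}⊗V_{t₂}⊗V_{t₃} → V_{t₁+t₉−e₂+e₃}. -/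

import Mathlib

set_option linter.unusedVariables false

open TensorProduct

noncomputable section

/-- a triple t = (λ, μ, σ) ∈ ℚ × ℚ × ℤ/2 -/
structure Triple where
  lam : ℚ
  mu : ℚ
  sg : ZMod 2

instance : Add Triple := ⟨fun a b => ⟨a.lam + b.lam, a.mu + b.mu, a.sg + b.sg⟩⟩
instance : Neg Triple := ⟨fun a => ⟨-a.lam, -a.mu, -a.sg⟩⟩
instance : Sub Triple := ⟨fun a b => a + -b⟩

def e₂ : Triple := ⟨0, 1, 0⟩
def e₃ : Triple := ⟨0, 0, 1⟩
/-- t* = (−λ, −μ, σ+1) -/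
def Triple.star (t : Triple) : Triple := ⟨-t.lam, -t.mu, t.sg + 1⟩

/-- the underlying space of every V_t: basis v = (1,0) (degree σ), w = (0,1) (degree σ+1) -/
abbrev V : Type := ℚ × ℚ
abbrev VV : Type := V ⊗[ℚ] V
abbrev VVV : Type := V ⊗[ℚ] VV

def vv : V := (1, 0)
def ww : V := (0, 1)

/-- (−1)^σ -/
def sgn (s : ZMod 2) : ℚ := if s = 0 then 1 else -1

/-- H: v ↦ (μ+1)v, w ↦ (μ−1)w -/
def opH (t : Triple) : V →ₗ[ℚ] V :=
  LinearMap.prodMap ((t.mu + 1) • LinearMap.id) ((t.mu - 1) • LinearMap.id)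
/-- D: multiplication by λ -/
def opD (t : Triple) : V →ₗ[ℚ] V := t.lam • LinearMap.id
/-- E: v ↦ 0, w ↦ λv -/
def opE (t : Triple) : V →ₗ[ℚ] V := (LinearMap.inl ℚ ℚ ℚ) ∘ₗ (t.lam • LinearMap.snd ℚ ℚ ℚ)
/-- F: v ↦ w, w ↦ 0 -/
def opF (t : Triple) : V →ₗ[ℚ] V := (LinearMap.inr ℚ ℚ ℚ) ∘ₗ (LinearMap.fst ℚ ℚ ℚ)
/-- the parity operator x ↦ (−1)^{deg x} x on V_t -/
def opJ (t : Triple) : V →ₗ[ℚ] V :=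
  LinearMap.prodMap (sgn t.sg • LinearMap.id) ((- sgn t.sg) • LinearMap.id)

/-- the four generators H, D, E, F of gl(1|1) -/
inductive Gen | H | D | E | F

/-- H and D have degree 0; E and F have degree 1 -/
def Gen.isEven : Gen → Bool
  | .H => true | .D => true | .E => false | .F => false

def op : Gen → Triple → V →ₗ[ℚ] V
  | .H, t => opH t
  | .D, t => opD t
  | .E, t => opE t
  | .F, t => opF t

/-- the super-Leibniz action X·(x⊗y) = (X·x)⊗y + (−1)^{deg X·deg x}·x⊗(X·y)
on V_{t₁}⊗V_{t₂} (the sign being implemented by the parity operator) -/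
def op2 (g : Gen) (t₁ t₂ : Triple) : VV →ₗ[ℚ] VV :=
  TensorProduct.map (op g t₁) LinearMap.id +
  TensorProduct.map (if g.isEven then LinearMap.id else opJ t₁) (op g t₂)

/-- the linear map ℚ×ℚ → M sending (1,0) ↦ p and (0,1) ↦ q -/
def bmap {M : Type*} [AddCommGroup M] [Module ℚ M] (p q : M) : V →ₗ[ℚ] M :=
  LinearMap.coprod (LinearMap.toSpanSingleton ℚ M p) (LinearMap.toSpanSingleton ℚ M q)

/-- Y_{t₁,t₂} : V_{t₁+t₂+e₂} → V_{t₁}⊗V_{t₂} -/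
def Ymap (t₁ t₂ : Triple) : V →ₗ[ℚ] VV :=
  bmap (vv ⊗ₜ[ℚ] vv) (ww ⊗ₜ[ℚ] vv + sgn t₁.sg • (vv ⊗ₜ[ℚ] ww))

/-- Y'_{t₁,t₂} : V_{t₁+t₂−e₂+e₃} → V_{t₁}⊗V_{t₂} -/
def Y'map (t₁ t₂ : Triple) : V →ₗ[ℚ] VV :=
  bmap ((t₁.lam + t₂.lam)⁻¹ •
      (t₁.lam • (vv ⊗ₜ[ℚ] ww) - (sgn t₁.sg * t₂.lam) • (ww ⊗ₜ[ℚ] vv)))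
    (ww ⊗ₜ[ℚ] ww)

/-- L_{t₁,t₂} : V_{t₁}⊗V_{t₂} → V_{t₁+t₂+e₂} -/
def Lmap (t₁ t₂ : Triple) : VV →ₗ[ℚ] V :=
  TensorProduct.lift (LinearMap.mk₂ ℚ
    (fun x y => ((x.1 * y.1 : ℚ),
      (t₁.lam / (t₁.lam + t₂.lam)) * (x.2 * y.1)
        + (sgn t₁.sg * t₂.lam / (t₁.lam + t₂.lam)) * (x.1 * y.2)))
    (by intro x x' y; apply Prod.ext <;> simp <;> ring)
    (by intro a x y; apply Prod.ext <;> simp [smul_eq_mul] <;> ring)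
    (by intro x y y'; apply Prod.ext <;> simp <;> ring)
    (by intro a x y; apply Prod.ext <;> simp [smul_eq_mul] <;> ring))

/-- L'_{t₁,t₂} : V_{t₁}⊗V_{t₂} → V_{t₁+t₂−e₂+e₃} -/
def L'map (t₁ t₂ : Triple) : VV →ₗ[ℚ] V :=
  TensorProduct.lift (LinearMap.mk₂ ℚ
    (fun x y => ((x.1 * y.2 - sgn t₁.sg * (x.2 * y.1) : ℚ), (x.2 * y.2 : ℚ)))
    (by intro x x' y; apply Prod.ext <;> simp <;> ring)
    (by intro a x y; apply Prod.ext <;> simp [smul_eq_mul] <;> ring)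
    (by intro x y y'; apply Prod.ext <;> simp <;> ring)
    (by intro a x y; apply Prod.ext <;> simp [smul_eq_mul] <;> ring))

/-- ∩_t : V_{t*}⊗V_t → ℚ -/
def capMap (t : Triple) : VV →ₗ[ℚ] ℚ :=
  TensorProduct.lift (LinearMap.mk₂ ℚ
    (fun x y => (x.1 * y.2 + sgn t.sg * (x.2 * y.1) : ℚ))
    (by intro x x' y; simp; ring)
    (by intro a x y; simp [smul_eq_mul]; ring)
    (by intro x y y'; simp; ring)
    (by intro a x y; simp [smul_eq_mul]; ring))

/-- ∪_t : ℚ → V_{t*}⊗V_t -/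
def cupMap (t : Triple) : ℚ →ₗ[ℚ] VV :=
  LinearMap.toSpanSingleton ℚ VV (ww ⊗ₜ[ℚ] vv - sgn t.sg • (vv ⊗ₜ[ℚ] ww))


/-- t₄ = t₁+t₂+e₂ -/
def T4 (t₁ t₂ : Triple) : Triple := t₁ + t₂ + e₂
/-- t₅ = t₄+t₃+e₂ -/
def T5 (t₁ t₂ t₃ : Triple) : Triple := T4 t₁ t₂ + t₃ + e₂
/-- t₆ = t₂+t₃+e₂ -/
def T6 (t₂ t₃ : Triple) : Triple := t₂ + t₃ + e₂
/-- t₇ = t₄−2e₂+e₃ -/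
def T7 (t₁ t₂ : Triple) : Triple := T4 t₁ t₂ - e₂ - e₂ + e₃
/-- t₈ = t₅−2e₂+e₃ -/
def T8 (t₁ t₂ t₃ : Triple) : Triple := T5 t₁ t₂ t₃ - e₂ - e₂ + e₃
/-- t₉ = t₆−2e₂+e₃ -/
def T9 (t₂ t₃ : Triple) : Triple := T6 t₂ t₃ - e₂ - e₂ + e₃
/-- κ = λ₂(λ₁+λ₂+λ₃)/((λ₁+λ₂)(λ₂+λ₃)) -/
def kap (t₁ t₂ t₃ : Triple) : ℚ :=
  t₂.lam * (t₁.lam + t₂.lam + t₃.lam) / ((t₁.lam + t₂.lam) * (t₂.lam + t₃.lam))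

theorem sgn_add (a b : ZMod 2) : sgn (a + b) = sgn a * sgn b := by
  fin_cases a <;> fin_cases b <;> simp [sgn] <;> decide

theorem sgn_one' : sgn 1 = -1 := by
  simp [sgn]

theorem T4_lam (a b : Triple) : (T4 a b).lam = a.lam + b.lam := by
  change a.lam + b.lam + 0 = _
  ring

theorem T4_sg (a b : Triple) : (T4 a b).sg = a.sg + b.sg := by
  change a.sg + b.sg + 0 = _
  ring

theorem T6_lam (a b : Triple) : (T6 a b).lam = a.lam + b.lam := T4_lam a b

theorem T7_lam (a b : Triple) : (T7 a b).lam = a.lam + b.lam := by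
  change a.lam + b.lam + 0 + -0 + -0 + 0 = _
  ring

theorem T9_lam (a b : Triple) : (T9 a b).lam = a.lam + b.lam := T7_lam a b

theorem T7_sg (a b : Triple) : (T7 a b).sg = a.sg + b.sg + 1 := by
  change a.sg + b.sg + 0 + -0 + -0 + 1 = _
  ring

theorem bmap_vv {M : Type*} [AddCommGroup M] [Module ℚ M] (p q : M) : bmap p q vv = p := by
  simp [bmap, vv]

theorem bmap_ww {M : Type*} [AddCommGroup M] [Module ℚ M] (p q : M) : bmap p q ww = q := by
  simp [bmap, ww]

theorem hom_ext_vw {M : Type*} [AddCommGroup M] [Module ℚ M] {f g : V →ₗ[ℚ] M}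
    (hv : f vv = g vv) (hw : f ww = g ww) : f = g := by
  apply LinearMap.prod_ext <;> ext
  · simpa [vv] using hv
  · simpa [ww] using hw

theorem Lmap_tmul (a b : Triple) (x y : V) : Lmap a b (x ⊗ₜ[ℚ] y) = ((x.1 * y.1 : ℚ),
      (a.lam / (a.lam + b.lam)) * (x.2 * y.1)
        + (sgn a.sg * b.lam / (a.lam + b.lam)) * (x.1 * y.2)) := by
  simp [Lmap]

theorem L'map_tmul (a b : Triple) (x y : V) : L'map a b (x ⊗ₜ[ℚ] y) =
    ((x.1 * y.2 - sgn a.sg * (x.2 * y.1) : ℚ), (x.2 * y.2 : ℚ)) := by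
  simp [L'map]

/-- Lemma 22: associativity identities for Y, Y', L, L'. -/
theorem stmt11 (t₁ t₂ t₃ : Triple)
    (h₁ : t₁.lam ≠ 0) (h₂ : t₂.lam ≠ 0) (h₃ : t₃.lam ≠ 0)
    (h₁₂ : t₁.lam + t₂.lam ≠ 0) (h₂₃ : t₂.lam + t₃.lam ≠ 0)
    (h₁₂₃ : t₁.lam + t₂.lam + t₃.lam ≠ 0) :
    TensorProduct.map LinearMap.id (Ymap t₂ t₃) ∘ₗ Ymap t₁ (T6 t₂ t₃) =
      (TensorProduct.assoc ℚ V V V).toLinearMap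
        ∘ₗ TensorProduct.map (Ymap t₁ t₂) LinearMap.id ∘ₗ Ymap (T4 t₁ t₂) t₃ ∧
    TensorProduct.map LinearMap.id (Y'map t₂ t₃) ∘ₗ Y'map t₁ (T9 t₂ t₃) =
      (TensorProduct.assoc ℚ V V V).toLinearMap
        ∘ₗ TensorProduct.map (Y'map t₁ t₂) LinearMap.id ∘ₗ Y'map (T7 t₁ t₂) t₃ ∧
    Lmap t₁ (T6 t₂ t₃) ∘ₗ TensorProduct.map LinearMap.id (Lmap t₂ t₃) =
      Lmap (T4 t₁ t₂) t₃ ∘ₗ TensorProduct.map (Lmap t₁ t₂) LinearMap.id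
        ∘ₗ (TensorProduct.assoc ℚ V V V).symm.toLinearMap ∧
    L'map t₁ (T9 t₂ t₃) ∘ₗ TensorProduct.map LinearMap.id (L'map t₂ t₃) =
      L'map (T7 t₁ t₂) t₃ ∘ₗ TensorProduct.map (L'map t₁ t₂) LinearMap.id
        ∘ₗ (TensorProduct.assoc ℚ V V V).symm.toLinearMap := by
  have h' : t₁.lam + (t₂.lam + t₃.lam) ≠ 0 := by rwa [← add_assoc]
  refine ⟨?_, ?_, ?_, ?_⟩
  · apply hom_ext_vw <;>
      simp only [LinearMap.comp_apply, Ymap, bmap_vv, bmap_ww, map_add, map_smul,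
        TensorProduct.map_tmul, LinearMap.id_apply, T4_sg, sgn_add, TensorProduct.add_tmul,
        TensorProduct.tmul_add, TensorProduct.tmul_smul, ← TensorProduct.smul_tmul',
        LinearEquiv.coe_coe, TensorProduct.assoc_tmul]
    module
  · apply hom_ext_vw <;>
      simp only [LinearMap.comp_apply, Y'map, bmap_vv, bmap_ww, map_add, map_sub, map_smul,
        TensorProduct.map_tmul, LinearMap.id_apply, T7_sg, T7_lam, T9_lam, sgn_one', sgn_add,
        TensorProduct.sub_tmul, TensorProduct.tmul_sub,
        TensorProduct.tmul_smul, ← TensorProduct.smul_tmul',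
        LinearEquiv.coe_coe, TensorProduct.assoc_tmul]
    match_scalars <;> field_simp <;> ring
  · apply TensorProduct.ext_threefold'
    intro x y z
    simp only [LinearMap.comp_apply, TensorProduct.map_tmul, LinearMap.id_apply,
      LinearEquiv.coe_coe, TensorProduct.assoc_symm_tmul, Lmap_tmul, T4_sg, T4_lam, T6_lam,
      sgn_add]
    apply Prod.ext
    · simp only []; ring
    · simp only []; field_simp; ring
  · apply TensorProduct.ext_threefold'
    intro x y z
    simp only [LinearMap.comp_apply, TensorProduct.map_tmul, LinearMap.id_apply,
      LinearEquiv.coe_coe, TensorProduct.assoc_symm_tmul, L'map_tmul, T7_sg, sgn_one', sgn_add]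
    apply Prod.ext
    · simp only []; ring
    · simp only []; ring
end
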